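/- Let 2 < q < r, λ ≥ 0 and K > 0. Define f_λ : ℝ → ℝ by f_λ(t) = 0 for t ≤ 0, f_λ(t) = t^{(q−2)/2} + λ t^{(r−2)/2} for 0 < t < K, and f_λ(t) = (1 + λ K^{(r−q)/2}) t^{(q−2)/2} for t ≥ K, and let F_λ(t) = ∫₀^t f_λ(τ) dτ. Then for every t > 0 one has 0 < (q/2) F_λ(t) ≤ t f_λ(t). -/

import Mathlib

/-!
On `[0, ∞)` the truncated nonlinearity factors as `f τ = τ ^ a * g τ` with `a = (q - 2) / 2` and
the nondecreasing continuous function `g τ = 1 + lam * (min τ K) ^ ((r - q) / 2) ≥ 1`. Hence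
`τ ^ a ≤ f τ ≤ g t * τ ^ a` for `0 ≤ τ ≤ t`. Since `∫₀ᵗ τ ^ a = t ^ (q / 2) / (q / 2)`, integrating
the lower bound gives positivity, and integrating the upper bound gives
`(q / 2) * ∫₀ᵗ f ≤ g t * t ^ (q / 2) = t * f t`.
-/

/-- Ambrosetti–Rabinowitz condition for the truncated supercritical
nonlinearity: with `F_λ(t) = ∫₀^t f_λ`, for every `t > 0` one has
`0 < (q/2) F_λ(t) ≤ t f_λ(t)`. -/
theorem stmt_11 (q r lam K : ℝ) (hq : 2 < q) (hqr : q < r) (hlam : 0 ≤ lam)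
    (hK : 0 < K) (f : ℝ → ℝ)
    (hf : ∀ t : ℝ, f t =
      if t ≤ 0 then 0
      else if t < K then t ^ ((q - 2) / 2) + lam * t ^ ((r - 2) / 2)
      else (1 + lam * K ^ ((r - q) / 2)) * t ^ ((q - 2) / 2)) :
    ∀ t : ℝ, 0 < t →
      0 < (q / 2) * ∫ τ in (0 : ℝ)..t, f τ ∧
      (q / 2) * (∫ τ in (0 : ℝ)..t, f τ) ≤ t * f t := by
  intro t ht
  obtain ⟨a, ha⟩ : ∃ a, a = (q - 2) / 2 := ⟨_, rfl⟩
  obtain ⟨b, hb⟩ : ∃ b, b = (r - q) / 2 := ⟨_, rfl⟩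
  have ha0 : 0 < a := by rw [ha]; linarith
  have hb0 : 0 < b := by rw [hb]; linarith
  have hab : (r - 2) / 2 = a + b := by rw [ha, hb]; ring
  have hqa : q / 2 = a + 1 := by rw [ha]; ring
  -- The factorization also holds at `0`, where `0 ^ a = 0` because `0 < a`.
  have hfac : ∀ τ : ℝ, 0 ≤ τ → f τ = τ ^ a * (1 + lam * (min τ K) ^ b) := by
    intro τ hτ
    rw [hf, hab, ← ha, ← hb]
    rcases hτ.eq_or_lt with rfl | hpos
    · simp [Real.zero_rpow ha0.ne']
    · rw [if_neg hpos.not_ge]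
      split_ifs with h
      · rw [min_eq_left h.le, Real.rpow_add hpos]; ring
      · rw [min_eq_right (not_lt.mp h)]; ring
  have hint : ∫ τ in (0 : ℝ)..t, f τ =
      ∫ τ in (0 : ℝ)..t, τ ^ a * (1 + lam * (min τ K) ^ b) := by
    apply intervalIntegral.integral_congr
    intro τ hτ
    rw [Set.uIcc_of_le ht.le] at hτ
    exact hfac τ hτ.1
  have hcpow : Continuous fun τ : ℝ => τ ^ a := Real.continuous_rpow_const ha0.le
  have hcg : Continuous fun τ : ℝ => τ ^ a * (1 + lam * (min τ K) ^ b) :=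
    hcpow.mul (continuous_const.add (continuous_const.mul
      ((Real.continuous_rpow_const hb0.le).comp (continuous_id.min continuous_const))))
  have hpow : ∫ τ in (0 : ℝ)..t, τ ^ a = t ^ (a + 1) / (a + 1) := by
    rw [integral_rpow (Or.inl (by linarith)), Real.zero_rpow (by linarith), sub_zero]
  have hlow : ∫ τ in (0 : ℝ)..t, τ ^ a ≤
      ∫ τ in (0 : ℝ)..t, τ ^ a * (1 + lam * (min τ K) ^ b) := by
    apply intervalIntegral.integral_mono_on ht.le (hcpow.intervalIntegrable _ _)
      (hcg.intervalIntegrable _ _)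
    intro τ hτ
    have h1 : 0 ≤ lam * (min τ K) ^ b :=
      mul_nonneg hlam (Real.rpow_nonneg (le_min hτ.1 hK.le) _)
    exact le_mul_of_one_le_right (Real.rpow_nonneg hτ.1 _) (by linarith)
  have hup : ∫ τ in (0 : ℝ)..t, τ ^ a * (1 + lam * (min τ K) ^ b) ≤
      ∫ τ in (0 : ℝ)..t, τ ^ a * (1 + lam * (min t K) ^ b) := by
    apply intervalIntegral.integral_mono_on ht.le (hcg.intervalIntegrable _ _)
      ((hcpow.mul continuous_const).intervalIntegrable _ _)
    intro τ hτ
    have h1 : (min τ K) ^ b ≤ (min t K) ^ b :=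
      Real.rpow_le_rpow (le_min hτ.1 hK.le) (min_le_min_right K hτ.2) hb0.le
    have h2 := mul_le_mul_of_nonneg_left h1 hlam
    exact mul_le_mul_of_nonneg_left (by linarith) (Real.rpow_nonneg hτ.1 _)
  rw [intervalIntegral.integral_mul_const, hpow] at hup
  rw [hpow] at hlow
  have ha1 : 0 < a + 1 := by linarith
  rw [hint, hfac t ht.le, hqa]
  constructor
  · exact mul_pos ha1 (lt_of_lt_of_le (div_pos (Real.rpow_pos_of_pos ht _) ha1) hlow)
  · refine (mul_le_mul_of_nonneg_left hup ha1.le).trans_eq ?_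
    rw [Real.rpow_add_one ht.ne']
    field_simp
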